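/- arXiv:2504.12776 — 9 statements merged into one kernel-verified Lean document; each statement's English description precedes it below -/
import Mathlib

section
/- Let Λ be a layout compatible with the bin assignment b, and let i ≠ j be two curves. If there exist elements k < k' with b(i,k) < b(j,k) and b(i,k') > b(j,k'), then there exists an element t with k ≤ t < k' such that λ_t(i) < λ_t(j) and λ_{t+1}(i) > λ_{t+1}(j), i.e., curves i and j cross between elements t and t+1. -/
open Finset

/-- `Compatible b L` : the layout `L` respects the bin assignment `b`. -/
def Compatible {m n : ℕ} (b : Fin m → Fin n → ℕ) (L : Fin n → Equiv.Perm (Fin m)) : Prop :=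
  ∀ i j : Fin m, ∀ k : Fin n, b i k < b j k → L k i < L k j

/-- Curves `i` and `j` cross between elements `k` and `k+1`. -/
def CrossAt {m n : ℕ} (L : Fin n → Equiv.Perm (Fin m)) (i j : Fin m) (k : Fin n) : Prop :=
  ∃ h : (k : ℕ) + 1 < n,
    (L k i < L k j ∧ L ⟨(k : ℕ) + 1, h⟩ j < L ⟨(k : ℕ) + 1, h⟩ i) ∨
    (L k j < L k i ∧ L ⟨(k : ℕ) + 1, h⟩ i < L ⟨(k : ℕ) + 1, h⟩ j)

instance {m n : ℕ} (L : Fin n → Equiv.Perm (Fin m)) (i j : Fin m) :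
    DecidablePred (CrossAt L i j) := fun k => by unfold CrossAt; infer_instance

/-- Number of crossings of curves `i` and `j` in layout `L`. -/
def crossCount {m n : ℕ} (L : Fin n → Equiv.Perm (Fin m)) (i j : Fin m) : ℕ :=
  (univ.filter (CrossAt L i j)).card

/-- Alternation pairs of curves `i` and `j` under bin assignment `b`. -/
def AltPair {m n : ℕ} (b : Fin m → Fin n → ℕ) (i j : Fin m) (p : Fin n × Fin n) : Prop :=
  p.1 < p.2 ∧ (∀ t : Fin n, p.1 < t → t < p.2 → b i t = b j t) ∧
    ((b i p.1 < b j p.1 ∧ b j p.2 < b i p.2) ∨ (b j p.1 < b i p.1 ∧ b i p.2 < b j p.2))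

instance {m n : ℕ} (b : Fin m → Fin n → ℕ) (i j : Fin m) :
    DecidablePred (AltPair b i j) := fun p => by unfold AltPair; infer_instance

/-- Alternation number of curves `i` and `j`. -/
def altCount {m n : ℕ} (b : Fin m → Fin n → ℕ) (i j : Fin m) : ℕ :=
  (univ.filter (AltPair b i j)).card

/-- Total crossing number of layout `L` (sum over unordered pairs of curves). -/
def totalCross {m n : ℕ} (L : Fin n → Equiv.Perm (Fin m)) : ℕ :=
  ∑ p ∈ univ.filter (fun p : Fin m × Fin m => p.1 < p.2), crossCount L p.1 p.2

/-- Total wiggle of layout `L`. -/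
def totalWiggle {m n : ℕ} (L : Fin n → Equiv.Perm (Fin m)) : ℤ :=
  ∑ k : Fin n, ∑ i : Fin m,
    if h : (k : ℕ) + 1 < n then
      |((L ⟨(k : ℕ) + 1, h⟩ i : ℕ) : ℤ) - ((L k i : ℕ) : ℤ)| else 0

theorem necessary_crossing {m n : ℕ} (hm : 0 < m) (hn : 0 < n)
    (b : Fin m → Fin n → ℕ) (L : Fin n → Equiv.Perm (Fin m))
    (hL : Compatible b L) (i j : Fin m) (hij : i ≠ j)
    (k k' : Fin n) (hkk' : k < k')
    (h1 : b i k < b j k) (h2 : b j k' < b i k') :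
    ∃ t : Fin n, k ≤ t ∧ t < k' ∧ ∃ ht : (t : ℕ) + 1 < n,
      L t i < L t j ∧ L ⟨(t : ℕ) + 1, ht⟩ j < L ⟨(t : ℕ) + 1, ht⟩ i := by
  by_contra hcon
  push Not at hcon
  have key : ∀ d : ℕ, ∀ h : (k : ℕ) + d < n, (k : ℕ) + d ≤ k' →
      L ⟨(k : ℕ) + d, h⟩ i < L ⟨(k : ℕ) + d, h⟩ j := by
    intro d
    induction d with
    | zero => intro h _; exact hL i j k h1
    | succ d ih =>
      intro h hle
      have h' : (k : ℕ) + d < n := by omega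
      have h3 := ih h' (by omega)
      have h4 := hcon ⟨(k : ℕ) + d, h'⟩ (Fin.le_def.2 (by simp))
        (Fin.lt_def.2 (by simp only; omega)) h h3
      refine lt_of_le_of_ne h4 ?_
      intro he
      exact hij ((L _).injective he)
  have hlt : (k : ℕ) < k' := hkk'
  have e : (k : ℕ) + (k' - k) = k' := by omega
  have h5 := key (k' - k) (by omega) (by omega)
  simp only [e] at h5
  exact lt_asymm h5 (hL j i k' h2)
end

section
/- For every layout Λ compatible with the bin assignment b and every pair of distinct curves i ≠ j, the number cross(Λ,i,j) of indices k at which curves i and j cross between elements k and k+1 is at least the alternation number alt(i,j). -/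
open Finset

theorem exists_cross {m n : ℕ} (L : Fin n → Equiv.Perm (Fin m)) (i j : Fin m) (hij : i ≠ j)
    (d : ℕ) : ∀ k k' : Fin n, (k' : ℕ) = k + d → L k i < L k j → L k' j < L k' i →
      ∃ t : Fin n, k ≤ t ∧ t < k' ∧ CrossAt L i j t := by
  induction d with
  | zero =>
    intro k k' h h1 h2
    have : k' = k := Fin.ext (by simpa using h)
    subst this
    exact absurd h1 (lt_asymm h2)
  | succ d ih =>
    intro k k' h h1 h2
    have hlt : (k : ℕ) + 1 < n := by have := k'.2; omega
    rcases lt_trichotomy (L ⟨(k : ℕ) + 1, hlt⟩ i) (L ⟨(k : ℕ) + 1, hlt⟩ j) with h3 | h3 | h3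
    · obtain ⟨t, ht1, ht2, ht3⟩ := ih ⟨(k : ℕ) + 1, hlt⟩ k' (by simp; omega) h3 h2
      refine ⟨t, ?_, ht2, ht3⟩
      rw [Fin.le_def] at ht1 ⊢
      simp at ht1
      omega
    · exact absurd ((L _).injective h3) hij
    · exact ⟨k, le_refl _, by rw [Fin.lt_def]; omega, hlt, Or.inl ⟨h1, h3⟩⟩

theorem exists_cross_of_alt {m n : ℕ} (b : Fin m → Fin n → ℕ) (L : Fin n → Equiv.Perm (Fin m))
    (hL : Compatible b L) (i j : Fin m) (hij : i ≠ j) (p : Fin n × Fin n)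
    (hp : AltPair b i j p) : ∃ t : Fin n, p.1 ≤ t ∧ t < p.2 ∧ CrossAt L i j t := by
  obtain ⟨h, -, h1 | h1⟩ := hp
  · exact exists_cross L i j hij (p.2 - p.1 : ℕ) p.1 p.2
      (by rw [Fin.lt_def] at h; omega) (hL _ _ _ h1.1) (hL _ _ _ h1.2)
  · obtain ⟨t, a, c, e, f⟩ := exists_cross L j i hij.symm (p.2 - p.1 : ℕ) p.1 p.2
      (by rw [Fin.lt_def] at h; omega) (hL _ _ _ h1.1) (hL _ _ _ h1.2)
    exact ⟨t, a, c, e, f.symm⟩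

theorem alt_unique {m n : ℕ} (b : Fin m → Fin n → ℕ) (i j : Fin m) (p q : Fin n × Fin n)
    (hp : AltPair b i j p) (hq : AltPair b i j q) (t : Fin n)
    (h1 : p.1 ≤ t) (h2 : t < p.2) (h3 : q.1 ≤ t) (h4 : t < q.2) : p = q := by
  obtain ⟨-, hp2, hp3⟩ := hp
  obtain ⟨-, hq2, hq3⟩ := hq
  apply Prod.ext
  · rcases lt_trichotomy p.1 q.1 with h | h | h
    · have := hp2 q.1 h (lt_of_le_of_lt h3 h2)
      omega
    · exact h
    · have := hq2 p.1 h (lt_of_le_of_lt h1 h4)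
      omega
  · rcases lt_trichotomy p.2 q.2 with h | h | h
    · have := hq2 p.2 (lt_of_le_of_lt h3 h2) h
      omega
    · exact h
    · have := hp2 q.2 (lt_of_le_of_lt h1 h4) h
      omega

theorem crossings_ge_alternations {m n : ℕ} (hm : 0 < m) (hn : 0 < n)
    (b : Fin m → Fin n → ℕ) (L : Fin n → Equiv.Perm (Fin m))
    (hL : Compatible b L) (i j : Fin m) (hij : i ≠ j) :
    altCount b i j ≤ crossCount L i j := by
  haveI : Nonempty (Fin n) := ⟨⟨0, hn⟩⟩
  have key := exists_cross_of_alt b L hL i j hij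
  choose! f hf1 hf2 hf3 using key
  unfold altCount crossCount
  apply Finset.card_le_card_of_injOn f
  · intro p hp
    simp only [Finset.coe_filter, Finset.mem_univ, true_and, Set.mem_setOf_eq] at hp ⊢
    exact hf3 p hp
  · intro p hp q hq h
    simp only [Finset.coe_filter, Finset.mem_univ, true_and, Set.mem_setOf_eq] at hp hq
    exact alt_unique b i j p q hp hq (f p) (hf1 p hp) (hf2 p hp)
      (by rw [h]; exact hf1 q hq) (by rw [h]; exact hf2 q hq)
end

section
/- For every bin assignment b there exists a layout Λ compatible with b such that cross(Λ,i,j) = alt(i,j) for every pair of distinct curves i ≠ j. -/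
open Finset

theorem refine_perm {m : ℕ} (f : Fin m → ℕ) (σ : Equiv.Perm (Fin m)) :
    ∃ τ : Equiv.Perm (Fin m), ∀ i j, τ i < τ j ↔ (f i < f j ∨ (f i = f j ∧ σ i < σ j)) := by
  let g : Fin m → ℕ ×ₗ Fin m := fun i => toLex (f i, σ i)
  have hg : Function.Injective g := by
    intro i j h
    have h2 : (f i, σ i) = (f j, σ j) := h
    exact σ.injective (Prod.mk.inj h2).2
  have hm : StrictMono (g ∘ Tuple.sort g) :=
    (Tuple.monotone_sort g).strictMono_of_injective (hg.comp (Tuple.sort g).injective)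
  refine ⟨(Tuple.sort g).symm, fun i j => ?_⟩
  rw [← hm.lt_iff_lt]
  simp only [Function.comp, Equiv.apply_symm_apply]
  simp only [g, Prod.Lex.toLex_lt_toLex]

theorem init_perm {m : ℕ} (n : ℕ) : ∀ c : ℕ → Fin m → ℕ,
    ∃ P : Equiv.Perm (Fin m), ∀ i j, ∀ k, k < n → (∀ t, t < k → c t i = c t j) →
      c k i < c k j → P i < P j := by
  induction n with
  | zero => intro c; exact ⟨1, fun i j k hk => by omega⟩
  | succ n ih =>
    intro c
    obtain ⟨P, hP⟩ := ih (fun t => c (t+1))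
    obtain ⟨Q, hQ⟩ := refine_perm (c 0) P
    refine ⟨Q, fun i j k hk h hlt => (hQ i j).2 ?_⟩
    cases k with
    | zero => exact Or.inl hlt
    | succ k =>
      exact Or.inr ⟨h 0 (by omega), hP i j k (by omega) (fun t ht => h (t+1) (by omega)) hlt⟩

theorem seq_perm {m : ℕ} (n : ℕ) (c : ℕ → Fin m → ℕ) :
    ∃ S : ℕ → Equiv.Perm (Fin m),
      (∀ i j, ∀ k, k < n → (∀ t, t < k → c t i = c t j) → c k i < c k j → S 0 i < S 0 j) ∧
      (∀ i j k, c k i < c k j → S (k+1) i < S (k+1) j) ∧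
      (∀ i j k k', k ≤ k' → (∀ t, k ≤ t → t < k' → c t i = c t j) →
        (S k i < S k j ↔ S k' i < S k' j)) := by
  obtain ⟨P, hP⟩ := init_perm n c
  choose R hR using @refine_perm m
  let S : ℕ → Equiv.Perm (Fin m) := fun k => Nat.rec P (fun k σ => R (c k) σ) k
  have hS : ∀ k i j, S (k+1) i < S (k+1) j ↔
      (c k i < c k j ∨ (c k i = c k j ∧ S k i < S k j)) := fun k i j => hR (c k) (S k) i j
  refine ⟨S, hP, fun i j k h => (hS k i j).2 (Or.inl h), ?_⟩
  intro i j k k' hk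
  induction k', hk using Nat.le_induction with
  | base => intro _; rfl
  | succ k' hk ih =>
    intro h
    rw [ih (fun t h1 h2 => h t h1 (by omega)), hS]
    have := h k' hk (by omega)
    simp [this]

theorem exists_layout_achieving_alt {m n : ℕ} (hm : 0 < m) (hn : 0 < n)
    (b : Fin m → Fin n → ℕ) :
    ∃ L : Fin n → Equiv.Perm (Fin m), Compatible b L ∧
      ∀ i j : Fin m, i ≠ j → crossCount L i j = altCount b i j := by
  let c : ℕ → Fin m → ℕ := fun k i => if h : k < n then b i ⟨k, h⟩ else 0
  have hc : ∀ (k : Fin n) i, c k i = b i k := fun k i => by simp [c]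
  obtain ⟨S, h0, h1, h2⟩ := seq_perm n c
  have key : ∀ i j (p q : ℕ), p < q → (∀ t, p < t → t < q → c t i = c t j) →
      c p i < c p j → S q i < S q j := by
    intro i j p q hpq h hlt
    exact (h2 i j (p+1) q hpq (fun t ht ht' => h t (by omega) ht')).1 (h1 i j p hlt)
  -- a crossing yields an earlier difference of the right sign
  have back : ∀ i j (k : ℕ), k + 1 < n → S (k+1) i < S (k+1) j → S (k+2) j < S (k+2) i →
      ∃ p, p < k + 1 ∧ (∀ t, p < t → t < k + 1 → c t i = c t j) ∧ c p i < c p j ∧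
        c (k+1) j < c (k+1) i := by
    intro i j k hk ha hb
    have hd : c (k+1) j < c (k+1) i := by
      rcases lt_trichotomy (c (k+1) j) (c (k+1) i) with h | h | h
      · exact h
      · have := (h2 i j (k+1) (k+2) (by omega) (fun t ht ht' => by
          obtain rfl : t = k + 1 := by omega
          exact h.symm)).1 ha
        exact absurd hb (lt_asymm this)
      · exact absurd hb (lt_asymm (h1 i j (k+1) h))
    by_cases hall : ∀ t, t < k + 1 → c t i = c t j
    · have e1 := h0 j i (k+1) hk (fun t ht => (hall t ht).symm) hd
      have e2 := (h2 j i 0 (k+1) (by omega) (fun t _ ht => (hall t ht).symm)).1 e1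
      exact absurd ha (lt_asymm e2)
    · push Not at hall
      obtain ⟨t0, ht0, hne0⟩ := hall
      let p := Nat.findGreatest (fun t => c t i ≠ c t j) k
      have hp : c p i ≠ c p j :=
        Nat.findGreatest_spec (P := fun t => c t i ≠ c t j) (Nat.le_of_lt_succ ht0) hne0
      have hpk : p ≤ k := Nat.findGreatest_le k
      have hmid : ∀ t, p < t → t < k + 1 → c t i = c t j := fun t h h' => by
        have := Nat.findGreatest_is_greatest (P := fun t => c t i ≠ c t j) h (by omega)
        simpa using this
      refine ⟨p, by omega, hmid, ?_, hd⟩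
      rcases lt_or_gt_of_ne hp with h | h
      · exact h
      · have := key j i p (k+1) (by omega) (fun t a a' => (hmid t a a').symm) h
        exact absurd ha (lt_asymm this)
  refine ⟨fun k => S (k+1), ?_, ?_⟩
  · intro i j k h
    exact h1 i j k (by simpa [hc] using h)
  · intro i j _
    symm
    unfold crossCount altCount
    refine Finset.card_bij (fun p _ => ⟨(p.2 : ℕ) - 1, by omega⟩) ?_ ?_ ?_
    · rintro ⟨p, q⟩ h
      simp only [mem_filter, mem_univ, true_and, AltPair] at h ⊢
      obtain ⟨hpq, hmid, hs⟩ := h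
      have hpq' : (p : ℕ) < q := hpq
      have hq : (q : ℕ) - 1 + 1 = q := by omega
      have hmid' : ∀ t : ℕ, (p : ℕ) < t → t < q → c t i = c t j := fun t ht ht' => by
        have := hmid ⟨t, by omega⟩ ht ht'
        simpa [← hc] using this
      simp only [← hc] at hs
      refine ⟨by simp only [hq]; omega, ?_⟩
      simp only [hq]
      rcases hs with ⟨a, a'⟩ | ⟨a, a'⟩
      · exact Or.inl ⟨key i j p q hpq' hmid' a, h1 _ _ _ a'⟩
      · exact Or.inr ⟨key j i p q hpq' (fun t x y => (hmid' t x y).symm) a, h1 _ _ _ a'⟩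
    · rintro ⟨p, q⟩ h ⟨p', q'⟩ h' he
      simp only [mem_filter, mem_univ, true_and, AltPair] at h h'
      obtain ⟨hpq, hmid, hs⟩ := h
      obtain ⟨hpq', hmid', hs'⟩ := h'
      have he' : (q : ℕ) - 1 = q' - 1 := by simpa using he
      have x1 : (p : ℕ) < q := hpq
      have x2 : (p' : ℕ) < q' := hpq'
      obtain rfl : q = q' := Fin.ext (by omega)
      rcases lt_trichotomy p p' with h | h | h
      · have := hmid p' h hpq'; omega
      · rw [h]
      · have := hmid' p h hpq; omega
    · intro k hk
      simp only [mem_filter, mem_univ, true_and, CrossAt] at hk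
      obtain ⟨hkn, hs⟩ := hk
      rcases hs with ⟨a, a'⟩ | ⟨a, a'⟩
      · obtain ⟨p, hp, hmid, e, e'⟩ := back i j k hkn a a'
        refine ⟨(⟨p, by omega⟩, ⟨k + 1, hkn⟩), ?_, by simp⟩
        simp only [mem_filter, mem_univ, true_and, AltPair, ← hc]
        exact ⟨hp, fun t x y => hmid t x y, Or.inl ⟨e, e'⟩⟩
      · obtain ⟨p, hp, hmid, e, e'⟩ := back j i k hkn a a'
        refine ⟨(⟨p, by omega⟩, ⟨k + 1, hkn⟩), ?_, by simp⟩
        simp only [mem_filter, mem_univ, true_and, AltPair, ← hc]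
        exact ⟨hp, fun t x y => (hmid t x y).symm, Or.inr ⟨e, e'⟩⟩
end

section
/- For every bin assignment b, the minimum of the total crossing number over all layouts compatible with b equals Σ_{1 ≤ i < j ≤ m} alt(i,j). (This is the optimality guarantee of Theorem 1: for a given element order, the curve-ordering algorithm computes an order of the set curves with the minimum number of crossings.) -/
open Finset

theorem exists_crossAt {m n : ℕ} (L : Fin n → Equiv.Perm (Fin m)) (i j : Fin m)
    (k : Fin n) (h1 : L k i < L k j) (t : ℕ) (hkt : (k : ℕ) ≤ t) :
    ∀ ht : t < n, L ⟨t, ht⟩ j < L ⟨t, ht⟩ i →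
      ∃ s : Fin n, k ≤ s ∧ (s : ℕ) < t ∧ CrossAt L i j s := by
  induction t, hkt using Nat.le_induction with
  | base => intro ht h2; exact absurd h1 (not_lt.2 h2.le)
  | succ t hkt ih =>
    intro ht h2
    have ht' : t < n := by omega
    rcases lt_trichotomy (L ⟨t, ht'⟩ j) (L ⟨t, ht'⟩ i) with h | h | h
    · obtain ⟨s, a, c, d⟩ := ih ht' h
      exact ⟨s, a, by omega, d⟩
    · have := (L ⟨t, ht'⟩).injective h
      subst this
      exact absurd h2 (lt_irrefl _)
    · exact ⟨⟨t, ht'⟩, hkt, Nat.lt_succ_self t, ht, Or.inl ⟨h, h2⟩⟩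

theorem crossAt_symm {m n : ℕ} {L : Fin n → Equiv.Perm (Fin m)} {i j : Fin m} {k : Fin n}
    (h : CrossAt L i j k) : CrossAt L j i k := by
  obtain ⟨h, h'⟩ := h
  exact ⟨h, h'.symm⟩

theorem altCount_le_crossCount {m n : ℕ} (hn : 0 < n) (b : Fin m → Fin n → ℕ)
    (L : Fin n → Equiv.Perm (Fin m)) (hL : Compatible b L) (i j : Fin m) :
    altCount b i j ≤ crossCount L i j := by
  have key : ∀ p : Fin n × Fin n, AltPair b i j p →
      ∃ s : Fin n, p.1 ≤ s ∧ s < p.2 ∧ CrossAt L i j s := by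
    rintro ⟨k, k'⟩ ⟨h1, -, h | h⟩
    · exact exists_crossAt L i j k (hL _ _ _ h.1) k' (le_of_lt h1) k'.2 (hL _ _ _ h.2)
    · obtain ⟨s, a, c, d⟩ :=
        exists_crossAt L j i k (hL _ _ _ h.1) k' (le_of_lt h1) k'.2 (hL _ _ _ h.2)
      exact ⟨s, a, c, crossAt_symm d⟩
  haveI : Nonempty (Fin n) := ⟨⟨0, hn⟩⟩
  choose! f hf using key
  unfold altCount crossCount
  refine Finset.card_le_card_of_injOn f ?_ ?_
  · intro p hp
    have hp' : AltPair b i j p := by simpa using hp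
    simpa using (hf p hp').2.2
  · intro p hp q hq hpq
    have hp' : AltPair b i j p := by simpa using hp
    have hq' : AltPair b i j q := by simpa using hq
    obtain ⟨a1, a2, -⟩ := hf p hp'
    obtain ⟨b1, b2, -⟩ := hf q hq'
    rw [hpq] at a1 a2
    obtain ⟨p1, p2, p3⟩ := hp'
    obtain ⟨q1, q2, q3⟩ := hq'
    have e1 : p.1 = q.1 := by
      rcases lt_trichotomy p.1 q.1 with h | h | h
      · have := p2 q.1 h (lt_of_le_of_lt b1 a2); omega
      · exact h
      · have := q2 p.1 h (lt_of_le_of_lt a1 b2); omega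
    have e2 : p.2 = q.2 := by
      rcases lt_trichotomy p.2 q.2 with h | h | h
      · have := q2 p.2 (lt_of_le_of_lt b1 a2) h; omega
      · exact h
      · have := p2 q.2 (lt_of_le_of_lt a1 b2) h; omega
    exact Prod.ext e1 e2

theorem exists_perm_of_key {m : ℕ} {α : Type*} [LinearOrder α] (f : Fin m → α)
    (hf : Function.Injective f) :
    ∃ s : Equiv.Perm (Fin m), ∀ i j, f i < f j → s i < s j := by
  have hc : (univ.image f).card = m := by
    rw [Finset.card_image_of_injective _ hf]; simp
  let e := (univ.image f).orderIsoOfFin hc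
  let g : Fin m → Fin m := fun i => e.symm ⟨f i, by simp⟩
  have hg : ∀ i j, f i < f j → g i < g j := by
    intro i j h
    exact e.symm.lt_iff_lt.2 h
  have hinj : Function.Injective g := by
    intro i j h
    apply hf
    have := e.symm.injective h
    simpa using this
  exact ⟨Equiv.ofBijective g (Finite.injective_iff_bijective.1 hinj), hg⟩

def extB {m n : ℕ} (b : Fin m → Fin n → ℕ) (i : Fin m) (t : ℕ) : ℕ :=
  if h : t < n then b i ⟨t, h⟩ else 0

def lkey {m n : ℕ} (b : Fin m → Fin n → ℕ) (k : ℕ) (i : Fin m) : Lex (ℕ → ℕ) :=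
  toLex fun p => if k + p < n then extB b i (k + p) else
    if p < n then extB b i (n - 1 - p) else i

theorem lkey_inj {m n : ℕ} (b : Fin m → Fin n → ℕ) (k : ℕ) :
    Function.Injective (lkey b k) := by
  intro i j h
  have := congrFun (toLex.injective h) n
  simp at this
  exact Fin.ext this

theorem lkey_fwd {m n : ℕ} (b : Fin m → Fin n → ℕ) (k t : ℕ) (i j : Fin m) (hkt : k ≤ t)
    (ht : t < n) (heq : ∀ s, k ≤ s → s < t → extB b i s = extB b j s)
    (hlt : extB b i t < extB b j t) : lkey b k i < lkey b k j := by
  refine ⟨t - k, ?_, ?_⟩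
  · intro q hq
    have := heq (k + q) (by omega) (by omega)
    have h2 : k + q < n := by omega
    simp [lkey, h2, this]
  · have h2 : k + (t - k) = t := by omega
    simp [lkey, h2, ht, hlt]

theorem lkey_bwd {m n : ℕ} (b : Fin m → Fin n → ℕ) (k t : ℕ) (i j : Fin m) (hkt : t < k)
    (hk : k < n) (heq : ∀ s, t < s → s < n → extB b i s = extB b j s)
    (hlt : extB b i t < extB b j t) : lkey b k i < lkey b k j := by
  refine ⟨n - 1 - t, ?_, ?_⟩
  · intro q hq
    have h3 : q < n := by omega
    by_cases h2 : k + q < n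
    · have := heq (k + q) (by omega) (by omega)
      simp [lkey, h2, this]
    · have := heq (n - 1 - q) (by omega) (by omega)
      simp [lkey, h2, h3, this]
  · have h2 : ¬ k + (n - 1 - t) < n := by omega
    have h3 : n - 1 - t < n := by omega
    have h4 : n - 1 - (n - 1 - t) = t := by omega
    simp [lkey, h2, h3, h4, hlt]

theorem lkey_all {m n : ℕ} (b : Fin m → Fin n → ℕ) (k : ℕ) (i j : Fin m)
    (heq : ∀ s, s < n → extB b i s = extB b j s)
    (hlt : i < j) : lkey b k i < lkey b k j := by
  refine ⟨n, ?_, ?_⟩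
  · intro q hq
    have h3 : q < n := hq
    by_cases h2 : k + q < n
    · have := heq (k + q) (by omega)
      simp [lkey, h2, this]
    · have := heq (n - 1 - q) (by omega)
      simp [lkey, h2, h3, this]
  · simpa [lkey] using hlt

theorem lkey_cross {m n : ℕ} (b : Fin m → Fin n → ℕ) (k : ℕ) (hk : k + 1 < n) (i j : Fin m)
    (h1 : lkey b k i < lkey b k j) (h2 : lkey b (k + 1) j < lkey b (k + 1) i) :
    ∃ t, k < t ∧ t < n ∧ (∀ s, k < s → s < t → extB b i s = extB b j s) ∧
      extB b i k < extB b j k ∧ extB b j t < extB b i t := by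
  classical
  by_cases hex : ∃ t, k < t ∧ t < n ∧ extB b i t ≠ extB b j t
  · obtain ⟨a1, a2, a3⟩ := Nat.find_spec hex
    have hmin : ∀ s, k < s → s < Nat.find hex → extB b i s = extB b j s := by
      intro s hs hs'
      by_contra hne
      exact Nat.find_min hex hs' ⟨hs, by omega, hne⟩
    generalize Nat.find hex = t at *
    have hjt : extB b j t < extB b i t := by
      rcases lt_or_gt_of_ne a3 with h | h
      · exact absurd (lkey_fwd b (k+1) t i j a1 a2 (fun s hs => hmin s hs) h) (not_lt.2 h2.le)
      · exact h
    refine ⟨t, a1, a2, hmin, ?_, hjt⟩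
    rcases lt_trichotomy (extB b i k) (extB b j k) with h | h | h
    · exact h
    · refine absurd (lkey_fwd b k t j i a1.le a2 ?_ hjt) (not_lt.2 h1.le)
      intro s hs hs'
      rcases hs.eq_or_lt with e | e
      · rw [← e, h]
      · exact (hmin s e hs').symm
    · exact absurd (lkey_fwd b k k j i le_rfl (by omega) (fun s _ _ => by omega) h)
        (not_lt.2 h1.le)
  · exfalso
    push Not at hex
    by_cases hall : ∃ t, t ≤ k ∧ extB b i t ≠ extB b j t
    · obtain ⟨t, a1, a2, hmax⟩ : ∃ t, t ≤ k ∧ extB b i t ≠ extB b j t ∧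
          ∀ s, t < s → s < n → extB b i s = extB b j s := by
        obtain ⟨t0, ht0, ht0'⟩ := hall
        have hs := Nat.findGreatest_spec (P := fun t => extB b i t ≠ extB b j t) ht0 ht0'
        refine ⟨_, Nat.findGreatest_le k, hs, ?_⟩
        intro s hs hsn
        by_cases hsk : s ≤ k
        · have := Nat.findGreatest_is_greatest hs hsk
          simpa using this
        · exact hex s (by omega) hsn
      have gen : ∀ i j : Fin m, (∀ s, t < s → s < n → extB b i s = extB b j s) →
          extB b i t < extB b j t →
          lkey b k i < lkey b k j ∧ lkey b (k+1) i < lkey b (k+1) j := by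
        intro i j hm hl
        refine ⟨?_, lkey_bwd b (k+1) t i j (by omega) hk hm hl⟩
        rcases a1.eq_or_lt with e | e
        · subst e
          exact lkey_fwd b t t i j le_rfl (by omega) (fun s _ _ => by omega) hl
        · exact lkey_bwd b k t i j e (by omega) hm hl
      rcases lt_or_gt_of_ne a2 with h | h
      · exact lt_asymm h2 (gen i j hmax h).2
      · exact lt_asymm h1 (gen j i (fun s x y => (hmax s x y).symm) h).1
    · push Not at hall
      have heq : ∀ s, s < n → extB b i s = extB b j s := by
        intro s hs
        by_cases hsk : s ≤ k
        · exact hall s hsk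
        · exact hex s (by omega) hs
      rcases lt_trichotomy i j with h | h | h
      · exact lt_asymm h2 (lkey_all b (k+1) i j heq h)
      · subst h
        exact lt_irrefl _ h1
      · exact lt_asymm h1 (lkey_all b k j i (fun s x => (heq s x).symm) h)

theorem exists_good {m n : ℕ} (b : Fin m → Fin n → ℕ) :
    ∃ L : Fin n → Equiv.Perm (Fin m), Compatible b L ∧
      ∀ i j, crossCount L i j ≤ altCount b i j := by
  have H : ∀ k : Fin n, ∃ s : Equiv.Perm (Fin m), ∀ i j,
      lkey b k i < lkey b k j → s i < s j := fun k => exists_perm_of_key _ (lkey_inj b k)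
  choose L hL using H
  have hext : ∀ i (k : Fin n), extB b i k = b i k := by
    intro i k; simp [extB]
  have hL' : ∀ k i j, L k i < L k j → lkey b k i < lkey b k j := by
    intro k i j h
    rcases lt_trichotomy (lkey b k i) (lkey b k j) with h' | h' | h'
    · exact h'
    · have := lkey_inj b k h'
      subst this
      exact absurd h (lt_irrefl _)
    · exact absurd (hL k _ _ h') (not_lt.2 h.le)
  refine ⟨L, ?_, ?_⟩
  · intro i j k h
    apply hL
    exact lkey_fwd b k k i j le_rfl k.2 (fun s _ _ => by omega) (by simpa [hext] using h)
  · intro i j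
    have key : ∀ k : Fin n, CrossAt L i j k → ∃ t : Fin n, AltPair b i j (k, t) := by
      rintro k ⟨hk, h | h⟩
      · obtain ⟨t, c1, c2, c3, c4, c5⟩ := lkey_cross b k hk i j (hL' _ _ _ h.1) (hL' _ _ _ h.2)
        refine ⟨⟨t, c2⟩, c1, ?_, Or.inl ⟨?_, ?_⟩⟩
        · intro s hs hs'
          simpa [hext] using c3 s hs hs'
        · simpa [hext] using c4
        · simpa [extB, c2] using c5
      · obtain ⟨t, c1, c2, c3, c4, c5⟩ := lkey_cross b k hk j i (hL' _ _ _ h.1) (hL' _ _ _ h.2)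
        refine ⟨⟨t, c2⟩, c1, ?_, Or.inr ⟨?_, ?_⟩⟩
        · intro s hs hs'
          simpa [hext] using (c3 s hs hs').symm
        · simpa [hext] using c4
        · simpa [extB, c2] using c5
    choose! f hf using key
    unfold altCount crossCount
    refine Finset.card_le_card_of_injOn (fun k => (k, f k)) ?_ ?_
    · intro k hk
      have hk' : CrossAt L i j k := by simpa using hk
      simpa using hf k hk'
    · intro k _ l _ h
      exact congrArg Prod.fst h

theorem min_totalCross_eq_sum_alt {m n : ℕ} (hm : 0 < m) (hn : 0 < n)
    (b : Fin m → Fin n → ℕ) :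
    IsLeast {c : ℕ | ∃ L : Fin n → Equiv.Perm (Fin m), Compatible b L ∧ totalCross L = c}
      (∑ p ∈ univ.filter (fun p : Fin m × Fin m => p.1 < p.2), altCount b p.1 p.2) := by
  constructor
  · obtain ⟨L, h1, h2⟩ := exists_good b
    refine ⟨L, h1, ?_⟩
    unfold totalCross
    exact Finset.sum_congr rfl fun p _ =>
      le_antisymm (h2 _ _) (altCount_le_crossCount hn b L h1 _ _)
  · rintro c ⟨L, h1, rfl⟩
    unfold totalCross
    exact Finset.sum_le_sum fun p _ => altCount_le_crossCount hn b L h1 _ _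
end

section
/- For every bin assignment b and every pair of distinct curves i ≠ j, the minimum of cross(Λ,i,j) over all layouts Λ compatible with b equals alt(i,j). -/
open Finset

theorem exists_perm_aux {m : ℕ} (f : Fin m → ℕ) (i j : Fin m) (hij : i ≠ j) (P : Prop) :
    ∃ σ : Equiv.Perm (Fin m), (∀ a c, f a < f c → σ a < σ c) ∧
      (f i = f j → (σ i < σ j ↔ P)) := by
  classical
  let g : Fin m → ℕ := fun a => 3 * f a + (if a = i then (if P then 0 else 2) else 1)
  have key : ∀ a c, g a < g c → (Tuple.sort g)⁻¹ a < (Tuple.sort g)⁻¹ c := by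
    intro a c h
    by_contra hc
    have := Tuple.monotone_sort g (not_lt.mp hc)
    simp at this
    omega
  refine ⟨(Tuple.sort g)⁻¹, ?_, ?_⟩
  · intro a c h
    apply key
    simp only [g]
    split_ifs <;> omega
  · intro h
    by_cases hP : P
    · simp only [hP, iff_true]
      apply key
      simp [g, hP, hij.symm, h]
    · simp only [hP, iff_false, not_lt]
      apply le_of_lt
      apply key
      simp [g, hP, hij.symm, h]

theorem exists_change_aux (s : ℕ → Prop) (a d : ℕ) :
    ¬ (s a ↔ s (a + d)) → ∃ k, a ≤ k ∧ k < a + d ∧ ¬ (s k ↔ s (k + 1)) := by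
  induction d with
  | zero => intro h; exact absurd Iff.rfl h
  | succ d ih =>
    intro h
    by_cases h1 : s a ↔ s (a + d)
    · refine ⟨a + d, by omega, by omega, ?_⟩
      intro h2
      exact h (h1.trans h2)
    · obtain ⟨k, h1, h2, h3⟩ := ih h1
      exact ⟨k, h1, by omega, h3⟩

theorem crossAt_iff_aux {m n : ℕ} (L : Fin n → Equiv.Perm (Fin m)) (i j : Fin m) (hij : i ≠ j)
    (k : Fin n) (h : (k : ℕ) + 1 < n) :
    CrossAt L i j k ↔ ¬ (L k i < L k j ↔ L ⟨(k : ℕ) + 1, h⟩ i < L ⟨(k : ℕ) + 1, h⟩ j) := by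
  have h1 : L k i ≠ L k j := fun e => hij ((L k).injective e)
  have h2 : L ⟨(k : ℕ) + 1, h⟩ i ≠ L ⟨(k : ℕ) + 1, h⟩ j := fun e => hij ((L _).injective e)
  unfold CrossAt
  constructor
  · rintro ⟨_, h⟩
    grind
  · intro h3
    refine ⟨h, ?_⟩
    grind

theorem alt_le_cross_aux {m n : ℕ} (hn : 0 < n) (b : Fin m → Fin n → ℕ) (i j : Fin m) (hij : i ≠ j)
    (L : Fin n → Equiv.Perm (Fin m)) (hL : Compatible b L) :
    altCount b i j ≤ crossCount L i j := by
  have ex : ∀ p : Fin n × Fin n, AltPair b i j p →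
      ∃ k : Fin n, p.1 ≤ k ∧ k < p.2 ∧ CrossAt L i j k := by
    rintro ⟨p, q⟩ ⟨hlt, -, hb⟩
    simp only at hlt hb
    let s : ℕ → Prop := fun t => ∃ h : t < n, L ⟨t, h⟩ i < L ⟨t, h⟩ j
    have hs : ∀ t : Fin n, s t ↔ L t i < L t j := fun t => ⟨fun ⟨_, h⟩ => h, fun h => ⟨t.2, h⟩⟩
    have hpq : (p : ℕ) + ((q : ℕ) - p) = q := by have : (p : ℕ) < q := hlt; omega
    have hne : ¬ (s p ↔ s (p + ((q : ℕ) - p))) := by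
      rw [hpq, hs, hs]
      rcases hb with ⟨h1, h2⟩ | ⟨h1, h2⟩
      · have := hL _ _ _ h1
        have := hL _ _ _ h2
        grind
      · have := hL _ _ _ h1
        have := hL _ _ _ h2
        grind
    obtain ⟨k, h1, h2, h3⟩ := exists_change_aux s _ _ hne
    rw [hpq] at h2
    have hq := q.2
    refine ⟨⟨k, by omega⟩, h1, h2, ?_⟩
    rw [crossAt_iff_aux L i j hij _ (by simp only; omega), ← hs, ← hs]
    exact h3
  have : Nonempty (Fin n) := ⟨⟨0, hn⟩⟩
  choose! F hF using ex
  unfold altCount crossCount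
  apply Finset.card_le_card_of_injOn F
  · intro p hp
    simp only [coe_filter, mem_univ, true_and, Set.mem_setOf_eq] at hp ⊢
    exact (hF p hp).2.2
  · intro p hp q hq he
    simp only [coe_filter, mem_univ, true_and, Set.mem_setOf_eq] at hp hq
    obtain ⟨p1, p2, -⟩ := hF p hp
    obtain ⟨q1, q2, -⟩ := hF q hq
    rw [← he] at q1 q2
    obtain ⟨-, pe, pb⟩ := hp
    obtain ⟨-, qe, qb⟩ := hq
    have a1 := pe q.1
    have a2 := pe q.2
    have a3 := qe p.1
    have a4 := qe p.2
    apply Prod.ext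
    · rcases lt_trichotomy p.1 q.1 with h | h | h
      · have := a1 h (lt_of_le_of_lt q1 p2); omega
      · exact h
      · have := a3 h (lt_of_le_of_lt p1 q2); omega
    · rcases lt_trichotomy p.2 q.2 with h | h | h
      · have := a4 (lt_of_le_of_lt q1 p2) h; omega
      · exact h
      · have := a2 (lt_of_le_of_lt p1 q2) h; omega

/-- Target relative order of the two curves at `k`. -/
def sAux {n : ℕ} (x y : Fin n → ℕ) (k : Fin n) : Prop :=
  (∃ t ≤ k, x t < y t ∧ ∀ u, t < u → u ≤ k → x u = y u) ∨
  ((∀ t ≤ k, x t = y t) ∧ ∃ t, x t < y t ∧ ∀ u < t, x u = y u)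

theorem sAux_of_lt {n : ℕ} (x y : Fin n → ℕ) (k : Fin n) (h : x k < y k) : sAux x y k :=
  Or.inl ⟨k, le_rfl, h, fun u h1 h2 => absurd h1 (not_lt.mpr h2)⟩

theorem not_sAux_of_lt {n : ℕ} (x y : Fin n → ℕ) (k : Fin n) (h : y k < x k) : ¬ sAux x y k := by
  rintro (⟨t, h1, h2, h3⟩ | ⟨h1, -⟩)
  · rcases h1.lt_or_eq with h4 | rfl
    · have := h3 k h4 le_rfl; omega
    · omega
  · have := h1 k le_rfl; omega

theorem sAux_succ {n : ℕ} (x y : Fin n → ℕ) (k k' : Fin n) (hk : (k' : ℕ) = k + 1)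
    (h : x k' = y k') : sAux x y k ↔ sAux x y k' := by
  have hle : ∀ t : Fin n, t ≤ k' ↔ t ≤ k ∨ t = k' := by
    intro t; rw [Fin.le_def, Fin.le_def, Fin.ext_iff]; omega
  have hkk : k < k' := by rw [Fin.lt_def]; omega
  unfold sAux
  apply or_congr
  · constructor
    · rintro ⟨t, h1, h2, h3⟩
      refine ⟨t, (hle t).2 (Or.inl h1), h2, fun u h4 h5 => ?_⟩
      rcases (hle u).1 h5 with h6 | rfl
      · exact h3 u h4 h6
      · exact h
    · rintro ⟨t, h1, h2, h3⟩
      rcases (hle t).1 h1 with h6 | rfl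
      · exact ⟨t, h6, h2, fun u h4 h5 => h3 u h4 ((hle u).2 (Or.inl h5))⟩
      · omega
  · apply and_congr_left
    intro _
    constructor
    · intro h1 t ht
      rcases (hle t).1 ht with h6 | rfl
      · exact h1 t h6
      · exact h
    · intro h1 t ht
      exact h1 t ((hle t).2 (Or.inl ht))

theorem last_ne_aux {n : ℕ} (x y : Fin n → ℕ) (k : Fin n) (h : ¬ ∀ t ≤ k, x t = y t) :
    ∃ t ≤ k, x t ≠ y t ∧ ∀ u, t < u → u ≤ k → x u = y u := by
  classical
  push Not at h
  obtain ⟨t0, ht0, hne⟩ := h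
  let S : Finset (Fin n) := univ.filter (fun t => t ≤ k ∧ x t ≠ y t)
  have hS : S.Nonempty := ⟨t0, by simp [S, ht0, hne]⟩
  have hm := S.max'_mem hS
  simp only [S, mem_filter, mem_univ, true_and] at hm
  refine ⟨_, hm.1, hm.2, fun u h1 h2 => ?_⟩
  by_contra h3
  exact absurd (S.le_max' u (by simp [S, h2, h3])) (not_le.mpr h1)

theorem alt_of_change_aux {m n : ℕ} (b : Fin m → Fin n → ℕ) (i j : Fin m)
    (k k' : Fin n) (hk : (k' : ℕ) = k + 1)
    (h : ¬ (sAux (b i) (b j) k ↔ sAux (b i) (b j) k')) : ∃ t, AltPair b i j (t, k') := by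
  have hlt : ∀ t : Fin n, t < k' ↔ t ≤ k := by
    intro t; rw [Fin.le_def, Fin.lt_def]; omega
  have hne : b i k' ≠ b j k' := fun e => h (sAux_succ _ _ k k' hk e)
  by_cases hall : ∀ t ≤ k, b i t = b j t
  · exfalso
    apply h
    rcases hne.lt_or_gt with h1 | h1
    · refine iff_of_true (Or.inr ⟨hall, k', h1, fun u hu => hall u ((hlt u).1 hu)⟩)
        (sAux_of_lt _ _ _ h1)
    · refine iff_of_false ?_ (not_sAux_of_lt _ _ _ h1)
      rintro (⟨t, h2, h3, -⟩ | ⟨-, t, h2, h3⟩)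
      · have := hall t h2; omega
      · rcases lt_trichotomy t k' with h4 | rfl | h4
        · have := hall t ((hlt t).1 h4); omega
        · omega
        · exact hne (h3 _ h4)
  · obtain ⟨t, h1, h2, h3⟩ := last_ne_aux _ _ k hall
    refine ⟨t, (hlt t).2 h1, fun u h4 h5 => h3 u h4 ((hlt u).1 h5), ?_⟩
    simp only
    rcases h2.lt_or_gt with h4 | h4 <;> rcases hne.lt_or_gt with h5 | h5
    · exact absurd (iff_of_true (Or.inl ⟨t, h1, h4, h3⟩) (sAux_of_lt _ _ _ h5)) h
    · exact Or.inl ⟨h4, h5⟩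
    · exact Or.inr ⟨h4, h5⟩
    · refine absurd (iff_of_false ?_ (not_sAux_of_lt _ _ _ h5)) h
      rintro (⟨v, h6, h7, h8⟩ | ⟨h6, -⟩)
      · rcases lt_trichotomy t v with h9 | rfl | h9
        · have := h3 v h9 h6; omega
        · omega
        · have := h8 t h9 h1; omega
      · exact hall h6

theorem min_crossCount_eq_alt {m n : ℕ} (hm : 0 < m) (hn : 0 < n)
    (b : Fin m → Fin n → ℕ) (i j : Fin m) (hij : i ≠ j) :
    IsLeast {c : ℕ | ∃ L : Fin n → Equiv.Perm (Fin m), Compatible b L ∧ crossCount L i j = c}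
      (altCount b i j) := by
  constructor
  · choose L hL1 hL2 using fun k : Fin n =>
      exists_perm_aux (fun a => b a k) i j hij (sAux (b i) (b j) k)
    have hc : Compatible b L := fun a c k h => hL1 k a c h
    have hs : ∀ k, L k i < L k j ↔ sAux (b i) (b j) k := by
      intro k
      rcases lt_trichotomy (b i k) (b j k) with h | h | h
      · exact iff_of_true (hc _ _ _ h) (sAux_of_lt _ _ _ h)
      · exact hL2 k h
      · exact iff_of_false (hc _ _ _ h).asymm (not_sAux_of_lt _ _ _ h)
    refine ⟨L, hc, le_antisymm ?_ (alt_le_cross_aux hn b i j hij L hc)⟩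
    have ex : ∀ k : Fin n, CrossAt L i j k →
        ∃ p : Fin n × Fin n, AltPair b i j p ∧ (p.2 : ℕ) = k + 1 := by
      intro k hk
      have h := hk.1
      rw [crossAt_iff_aux L i j hij k h, hs, hs] at hk
      obtain ⟨t, ht⟩ := alt_of_change_aux b i j k ⟨k + 1, h⟩ rfl hk
      exact ⟨_, ht, rfl⟩
    have : Nonempty (Fin n × Fin n) := ⟨(⟨0, hn⟩, ⟨0, hn⟩)⟩
    choose! F hF using ex
    unfold altCount crossCount
    apply Finset.card_le_card_of_injOn F
    · intro p hp
      simp only [coe_filter, mem_univ, true_and, Set.mem_setOf_eq] at hp ⊢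
      exact (hF p hp).1
    · intro p hp q hq he
      simp only [coe_filter, mem_univ, true_and, Set.mem_setOf_eq] at hp hq
      have h1 := (hF p hp).2
      have h2 := (hF q hq).2
      rw [he] at h1
      apply Fin.ext
      omega
  · rintro c ⟨L, hL, rfl⟩
    exact alt_le_cross_aux hn b i j hij L hL
end

section
/- Let b be a bin assignment and let i ≠ j be two curves with b(i,k) ≤ b(j,k) for every element k. Then there exists a layout Λ compatible with b that achieves the minimum total crossing number over all compatible layouts and additionally satisfies λ_k(i) < λ_k(j) for every element k (the curve of i stays strictly below the curve of j throughout, reflecting uncertain set containment). -/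
open Finset

def invSet {m : ℕ} (f g : Equiv.Perm (Fin m)) : Finset (Fin m × Fin m) :=
  univ.filter (fun p => f p.1 < f p.2 ∧ g p.2 < g p.1)

theorem mem_invSet {m : ℕ} (f g : Equiv.Perm (Fin m)) (p : Fin m × Fin m) :
    p ∈ invSet f g ↔ f p.1 < f p.2 ∧ g p.2 < g p.1 := by
  unfold invSet
  rw [Finset.mem_filter]
  simp

theorem invSet_swap_le {m : ℕ} (f g : Equiv.Perm (Fin m)) (i j : Fin m)
    (hf : f i < f j) (hg : g j < g i) :
    (invSet f (g * Equiv.swap i j)).card ≤ (invSet f g).card := by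
  classical
  have key : (invSet f (g * Equiv.swap i j) \ invSet f g).card ≤
      (invSet f g \ invSet f (g * Equiv.swap i j)).card := by
    apply Finset.card_le_card_of_injOn
      (fun p => (Equiv.swap i j p.1, Equiv.swap i j p.2))
    · rintro ⟨p, q⟩ h
      simp only [mem_invSet, Finset.coe_sdiff, Set.mem_sdiff, Finset.mem_coe,
        Equiv.Perm.mul_apply] at h ⊢
      simp only [Equiv.swap_apply_def] at h ⊢
      obtain ⟨⟨h1, h2⟩, h3⟩ := h
      have hne : i ≠ j := by rintro rfl; exact lt_irrefl _ hf
      have h3' : g p ≤ g q := by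
        by_contra hh; exact h3 ⟨h1, not_le.mp hh⟩
      grind
    · rintro ⟨p, q⟩ _ ⟨r, s⟩ _ h
      simpa using h
  have a := Finset.card_sdiff_add_card_inter (invSet f (g * Equiv.swap i j)) (invSet f g)
  have c := Finset.card_sdiff_add_card_inter (invSet f g) (invSet f (g * Equiv.swap i j))
  rw [Finset.inter_comm] at c
  omega

theorem invSet_mul {m : ℕ} (f g s : Equiv.Perm (Fin m)) :
    (invSet (f * s) (g * s)).card = (invSet f g).card := by
  apply Finset.card_bij (fun p _ => (s p.1, s p.2))
  · intro p hp
    simpa [mem_invSet] using hp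
  · rintro ⟨p, q⟩ _ ⟨r, t⟩ _ h
    simpa using h
  · rintro ⟨p, q⟩ h
    exact ⟨(s.symm p, s.symm q), by simpa [mem_invSet] using h, by simp⟩

def fixp {m : ℕ} (i j : Fin m) (f : Equiv.Perm (Fin m)) : Equiv.Perm (Fin m) :=
  if f j < f i then f * Equiv.swap i j else f

theorem invSet_fixp {m : ℕ} (i j : Fin m) (hij : i ≠ j) (f g : Equiv.Perm (Fin m)) :
    (invSet (fixp i j f) (fixp i j g)).card ≤ (invSet f g).card := by
  have hf' : f i ≠ f j := f.injective.ne hij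
  have hg' : g i ≠ g j := g.injective.ne hij
  unfold fixp
  split_ifs with hf hg hg
  · exact (invSet_mul _ _ _).le
  · have h := invSet_mul (f * Equiv.swap i j) g (Equiv.swap i j)
    rw [mul_assoc, Equiv.swap_mul_self, mul_one] at h
    rw [← h, Equiv.swap_comm]
    exact invSet_swap_le f g j i hf (lt_of_le_of_ne (not_lt.mp hg) hg')
  · exact invSet_swap_le f g i j (lt_of_le_of_ne (not_lt.mp hf) hf') hg
  · exact le_rfl

theorem totalCross_eq {m n : ℕ} (L : Fin n → Equiv.Perm (Fin m)) :
    totalCross L = ∑ k : Fin n,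
      if h : (k : ℕ) + 1 < n then (invSet (L k) (L ⟨(k : ℕ) + 1, h⟩)).card else 0 := by
  unfold totalCross crossCount
  simp_rw [Finset.card_filter]
  rw [Finset.sum_comm]
  refine Finset.sum_congr rfl fun k _ => ?_
  rw [← Finset.card_filter, Finset.filter_filter]
  split_ifs with h
  · symm
    apply Finset.card_bij (fun p _ => if p.1 < p.2 then p else (p.2, p.1))
    · rintro ⟨p, q⟩ hp
      simp only [mem_invSet, Finset.mem_filter, Finset.mem_univ, true_and] at hp ⊢
      have : p ≠ q := by rintro rfl; exact lt_irrefl _ hp.1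
      split_ifs with hpq
      · exact ⟨hpq, h, Or.inl hp⟩
      · exact ⟨lt_of_le_of_ne (not_lt.mp hpq) this.symm, h, Or.inr hp⟩
    · rintro ⟨p, q⟩ h1 ⟨r, s⟩ h2 h3
      simp only [mem_invSet] at h1 h2 h3
      grind
    · rintro ⟨p, q⟩ hp
      simp only [mem_invSet, Finset.mem_filter, Finset.mem_univ, true_and] at hp ⊢
      obtain ⟨hpq, _, hp | hp⟩ := hp
      · exact ⟨(p, q), hp, by simp [hpq]⟩
      · exact ⟨(q, p), hp, by simp [hpq.le]⟩
  · rw [Finset.card_eq_zero, Finset.filter_eq_empty_iff]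
    rintro p _ ⟨_, h', _⟩
    exact h h'

theorem exists_compatible {m n : ℕ} (b : Fin m → Fin n → ℕ) :
    ∃ L : Fin n → Equiv.Perm (Fin m), Compatible b L := by
  refine ⟨fun k => (Tuple.sort (fun i => b i k)).symm, fun i j k h => ?_⟩
  by_contra hc
  have := Tuple.monotone_sort (fun i => b i k) (not_lt.mp hc)
  simp at this
  omega

theorem optimal_layout_respecting_containment {m n : ℕ} (hm : 0 < m) (hn : 0 < n)
    (b : Fin m → Fin n → ℕ) (i j : Fin m) (hij : i ≠ j)
    (hsub : ∀ k : Fin n, b i k ≤ b j k) :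
    ∃ L : Fin n → Equiv.Perm (Fin m), Compatible b L ∧
      (∀ L' : Fin n → Equiv.Perm (Fin m), Compatible b L' → totalCross L ≤ totalCross L') ∧
      ∀ k : Fin n, L k i < L k j := by
  classical
  obtain ⟨L₀, hL₀⟩ := exists_compatible b
  obtain ⟨L, hL, hmin⟩ := Finset.exists_min_image
    (univ.filter (fun L : Fin n → Equiv.Perm (Fin m) => Compatible b L)) totalCross
    ⟨L₀, by simpa using hL₀⟩
  simp only [Finset.mem_filter, Finset.mem_univ, true_and] at hL hmin
  refine ⟨fun k => fixp i j (L k), ?_, ?_, ?_⟩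
  · intro p q k h
    have h1 := hL p q k h
    simp only [fixp]
    split_ifs with hk
    · have hb : b i k = b j k := by
        refine le_antisymm (hsub k) (not_lt.mp fun hlt => ?_)
        exact lt_asymm hk (hL i j k hlt)
      have hs : ∀ x, b (Equiv.swap i j x) k = b x k := by
        intro x
        rw [Equiv.swap_apply_def]
        split_ifs <;> simp_all
      simp only [Equiv.Perm.mul_apply]
      apply hL
      rwa [hs, hs]
    · exact h1
  · intro L' hL'
    refine le_trans ?_ (hmin L' hL')
    rw [totalCross_eq, totalCross_eq]
    refine Finset.sum_le_sum fun k _ => ?_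
    split_ifs with h
    · exact invSet_fixp i j hij _ _
    · exact le_rfl
  · intro k
    simp only [fixp]
    split_ifs with hk
    · simpa using hk
    · exact lt_of_le_of_ne (not_lt.mp hk) ((L k).injective.ne hij)
end

section
/- For every sequence Λ = (λ_1, …, λ_n) of permutations of {1,…,m}, the total wiggle of Λ is at most twice the total crossing number of Λ; that is, Σ_{k=1}^{n−1} Σ_{i=1}^{m} |λ_{k+1}(i) − λ_k(i)| ≤ 2 · (total crossing number of Λ). (This is the direction of the paper's claim that the combinatorial wiggle is controlled by the number of crossings, so that minimizing crossings suffices.) -/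
open Finset

lemma pos_eq_sum {m : ℕ} (σ : Equiv.Perm (Fin m)) (i : Fin m) :
    ((σ i : ℕ) : ℤ) = ∑ j : Fin m, if σ j < σ i then (1 : ℤ) else 0 := by
  rw [Equiv.sum_comp σ (fun j => if j < σ i then (1 : ℤ) else 0), Finset.sum_boole]
  have : (univ.filter (fun j => j < σ i)) = Finset.Iio (σ i) := by ext; simp
  rw [this, Fin.card_Iio]

lemma wiggle_step {m n : ℕ} (L : Fin n → Equiv.Perm (Fin m)) (k : Fin n) (i : Fin m) :
    (if h : (k : ℕ) + 1 < n then
      |((L ⟨(k : ℕ) + 1, h⟩ i : ℕ) : ℤ) - ((L k i : ℕ) : ℤ)| else 0) ≤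
    ∑ j : Fin m, if CrossAt L i j k then (1 : ℤ) else 0 := by
  split_ifs with h
  · rw [pos_eq_sum, pos_eq_sum, ← Finset.sum_sub_distrib]
    refine (Finset.abs_sum_le_sum_abs _ _).trans (Finset.sum_le_sum fun j _ => ?_)
    by_cases hij : i = j
    · subst hij
      simp
      split_ifs <;> simp
    · have h1 : L k i ≠ L k j := fun e => hij ((L k).injective e)
      have h2 : L ⟨(k : ℕ) + 1, h⟩ i ≠ L ⟨(k : ℕ) + 1, h⟩ j := fun e => hij ((L _).injective e)
      have hc : CrossAt L i j k ↔ 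
        (L k i < L k j ∧ L ⟨(k : ℕ) + 1, h⟩ j < L ⟨(k : ℕ) + 1, h⟩ i) ∨
        (L k j < L k i ∧ L ⟨(k : ℕ) + 1, h⟩ i < L ⟨(k : ℕ) + 1, h⟩ j) :=
        ⟨fun ⟨_, h⟩ => h, fun h' => ⟨h, h'⟩⟩
      simp only [hc]
      rcases lt_or_gt_of_ne h1 with a | a <;> rcases lt_or_gt_of_ne h2 with b | b <;>
        simp [a, b, a.not_gt, b.not_gt]
  · exact Finset.sum_nonneg fun j _ => by split_ifs <;> simp

lemma crossCount_symm {m n : ℕ} (L : Fin n → Equiv.Perm (Fin m)) (i j : Fin m) :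
    crossCount L i j = crossCount L j i := by
  unfold crossCount
  congr 1
  ext k
  simp only [Finset.mem_filter, CrossAt, Or.comm]

lemma crossCount_self {m n : ℕ} (L : Fin n → Equiv.Perm (Fin m)) (i : Fin m) :
    crossCount L i i = 0 := by
  simp [crossCount, CrossAt]

lemma two_mul_totalCross {m n : ℕ} (L : Fin n → Equiv.Perm (Fin m)) :
    ∑ i : Fin m, ∑ j : Fin m, crossCount L i j = 2 * totalCross L := by
  have e : ∀ i j : Fin m, crossCount L i j =
      (if i < j then crossCount L i j else 0) + (if j < i then crossCount L j i else 0) := by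
    intro i j
    rcases lt_trichotomy i j with h | h | h
    · simp [h, h.not_gt]
    · subst h; simp [crossCount_self]
    · simp [h, h.not_gt, crossCount_symm L i j]
  have t : totalCross L = ∑ i : Fin m, ∑ j : Fin m, if i < j then crossCount L i j else 0 := by
    rw [totalCross, Finset.sum_filter, Fintype.sum_prod_type]
  rw [Finset.sum_congr rfl fun i _ => Finset.sum_congr rfl fun j _ => e i j]
  simp only [Finset.sum_add_distrib]
  rw [Finset.sum_comm (f := fun i j : Fin m => if j < i then crossCount L j i else 0), ← t]
  ring

theorem wiggle_le_two_mul_crossings {m n : ℕ} (hm : 0 < m) (hn : 0 < n)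
    (L : Fin n → Equiv.Perm (Fin m)) :
    totalWiggle L ≤ 2 * (totalCross L : ℤ) := by
  have key : (2 * (totalCross L : ℤ)) =
      ∑ k : Fin n, ∑ i : Fin m, ∑ j : Fin m, if CrossAt L i j k then (1 : ℤ) else 0 := by
    have := two_mul_totalCross L
    rw [Finset.sum_comm, ← Nat.cast_ofNat, ← Nat.cast_mul, ← this]
    push_cast
    refine Finset.sum_congr rfl fun i _ => ?_
    rw [Finset.sum_comm]
    refine Finset.sum_congr rfl fun j _ => ?_
    rw [Finset.sum_boole, crossCount]
  rw [key, totalWiggle]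
  exact Finset.sum_le_sum fun k _ => Finset.sum_le_sum fun i _ => wiggle_step L k i
end

section
/- For every sequence Λ = (λ_1, …, λ_n) of permutations of {1,…,m}, the total crossing number of Λ is at most the total wiggle of Λ; that is, (total crossing number of Λ) ≤ Σ_{k=1}^{n−1} Σ_{i=1}^{m} |λ_{k+1}(i) − λ_k(i)|. -/
open Finset

lemma card_between {m : ℕ} (e : Equiv.Perm (Fin m)) (x y : ℕ) :
    (univ.filter (fun j : Fin m => x < (e j : ℕ) ∧ (e j : ℕ) ≤ y)).card ≤ y - x := by
  rw [← Nat.card_Ioc]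
  apply Finset.card_le_card_of_injOn (fun j => (e j : ℕ))
  · intro j hj
    simpa using hj
  · intro j _ j' _ h
    exact e.injective (Fin.ext h)

lemma inv_le {m : ℕ} (a b : Equiv.Perm (Fin m)) :
    (((univ.filter (fun p : Fin m × Fin m => a p.1 < a p.2 ∧ b p.2 < b p.1)).card : ℕ) : ℤ) ≤
      ∑ i : Fin m, |((b i : ℕ) : ℤ) - ((a i : ℕ) : ℤ)| := by
  have h1 : (univ.filter (fun p : Fin m × Fin m => a p.1 < a p.2 ∧ b p.2 < b p.1)).card ≤
      ∑ i : Fin m, (((b i : ℕ) - (a i : ℕ)) + ((a i : ℕ) - (b i : ℕ))) := by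
    calc _ ≤ ((univ.sigma (fun i : Fin m => univ.filter
            (fun j : Fin m => (a i : ℕ) < (a j : ℕ) ∧ (a j : ℕ) ≤ b i))).card +
          (univ.sigma (fun j : Fin m => univ.filter
            (fun i : Fin m => (b j : ℕ) < (b i : ℕ) ∧ (b i : ℕ) ≤ a j))).card) := by
          rw [← Finset.card_disjSum]
          apply Finset.card_le_card_of_injOn (fun p => if (a p.2 : ℕ) ≤ b p.1 then
            Sum.inl ⟨p.1, p.2⟩ else Sum.inr ⟨p.2, p.1⟩)
          · intro p hp
            simp only [coe_filter, mem_univ, true_and, Set.mem_ofPred_eq, Fin.lt_def] at hp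
            dsimp only
            split_ifs with h
            · simp; omega
            · simp; omega
          · rintro ⟨p, q⟩ _ ⟨r, s⟩ _ h
            dsimp only at h
            split_ifs at h <;> simp_all
      _ ≤ _ := by
          rw [Finset.card_sigma, Finset.card_sigma, ← Finset.sum_add_distrib]
          exact Finset.sum_le_sum fun i _ => add_le_add (card_between a _ _) (card_between b _ _)
  calc _ ≤ ((∑ i : Fin m, (((b i : ℕ) - (a i : ℕ)) + ((a i : ℕ) - (b i : ℕ))) : ℕ) : ℤ) := by
        exact_mod_cast h1
    _ = _ := by
        rw [Nat.cast_sum]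
        exact Finset.sum_congr rfl fun i _ => by rw [abs_eq_max_neg]; omega

lemma pairs_le {m : ℕ} (a b : Equiv.Perm (Fin m)) :
    ((univ.filter (fun p : Fin m × Fin m => p.1 < p.2)).filter (fun p =>
      (a p.1 < a p.2 ∧ b p.2 < b p.1) ∨ (a p.2 < a p.1 ∧ b p.1 < b p.2))).card ≤
    (univ.filter (fun p : Fin m × Fin m => a p.1 < a p.2 ∧ b p.2 < b p.1)).card := by
  apply Finset.card_le_card_of_injOn (fun p => if a p.1 < a p.2 then p else p.swap)
  · intro p hp
    simp only [coe_filter, mem_filter, mem_univ, true_and, Set.mem_ofPred_eq] at hp ⊢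
    split_ifs with h
    · rcases hp.2 with h' | h'
      · exact h'
      · exact absurd h'.1 (not_lt.2 h.le)
    · rcases hp.2 with h' | h'
      · exact absurd h'.1 h
      · exact h'
  · rintro ⟨p, q⟩ hp ⟨r, s⟩ hr h
    simp only [coe_filter, mem_filter, mem_univ, true_and, Set.mem_ofPred_eq] at hp hr
    have h1 := hp.1
    have h2 := hr.1
    dsimp only at h
    split_ifs at h <;> simp only [Prod.swap_prod_mk, Prod.mk.injEq] at h ⊢ <;> omega

theorem crossings_le_wiggle {m n : ℕ} (hm : 0 < m) (hn : 0 < n)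
    (L : Fin n → Equiv.Perm (Fin m)) :
    (totalCross L : ℤ) ≤ totalWiggle L := by
  have h : totalCross L = ∑ k : Fin n,
      ((univ.filter (fun p : Fin m × Fin m => p.1 < p.2)).filter
        (fun p => CrossAt L p.1 p.2 k)).card := by
    unfold totalCross crossCount
    simp only [Finset.card_filter]
    rw [Finset.sum_comm]
  rw [h, totalWiggle, Nat.cast_sum]
  apply Finset.sum_le_sum
  intro k _
  by_cases hk : (k : ℕ) + 1 < n
  · simp only [CrossAt, hk, exists_true_left, dite_true]
    refine le_trans ?_ (inv_le (L k) (L ⟨(k : ℕ) + 1, hk⟩))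
    have := pairs_le (L k) (L ⟨(k : ℕ) + 1, hk⟩)
    exact_mod_cast this
  · simp [CrossAt, hk]
end

section
/- Suppose all m curves of the bin assignment b have pairwise distinct bin vectors. Define i ≺ j if, at the smallest element index t where b(i,t) ≠ b(j,t), one has b(i,t) < b(j,t). Then ≺ is a strict total order on the curves, and there exists a layout Λ compatible with b achieving the minimum total crossing number over all compatible layouts whose first permutation λ_1 orders the curves according to ≺, i.e., λ_1(i) < λ_1(j) whenever i ≺ j. (This is the correctness of the look-ahead computation of the first column order in the curve-ordering algorithm.) -/
open Finset

/-- `i` precedes `j` if at the smallest element index where their bin vectors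
differ, the bin of `i` is smaller. -/
def Prec {m n : ℕ} (b : Fin m → Fin n → ℕ) (i j : Fin m) : Prop :=
  ∃ t : Fin n, b i t < b j t ∧ ∀ s : Fin n, s < t → b i s = b j s

/-- generic lexicographic comparison along a priority function -/
def PP {m n : ℕ} (b : Fin m → Fin n → ℕ) (f : Fin n → ℕ) (i j : Fin m) : Prop :=
  ∃ t : Fin n, b i t < b j t ∧ ∀ s : Fin n, f s < f t → b i s = b j s

def ppos {n : ℕ} (k : ℕ) (t : Fin n) : ℕ := if k ≤ (t : ℕ) then (t : ℕ) else n + (n - (t : ℕ))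

lemma ppos_inj {n : ℕ} (k : ℕ) : Function.Injective (ppos k : Fin n → ℕ) := by
  intro s t h
  unfold ppos at h
  ext
  have := s.2
  have := t.2
  split_ifs at h <;> omega

lemma PP_irrefl {m n : ℕ} (b : Fin m → Fin n → ℕ) (f : Fin n → ℕ) (i : Fin m) : ¬ PP b f i i := by
  rintro ⟨t, h, _⟩
  exact lt_irrefl _ h

lemma PP_trans {m n : ℕ} (b : Fin m → Fin n → ℕ) (f : Fin n → ℕ) (hf : Function.Injective f)
    (i j l : Fin m) : PP b f i j → PP b f j l → PP b f i l := by
  rintro ⟨t, h, h'⟩ ⟨u, g, g'⟩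
  rcases lt_trichotomy (f t) (f u) with c | c | c
  · exact ⟨t, by rw [← g' t c]; exact h, fun s hs => (h' s hs).trans (g' s (hs.trans c))⟩
  · obtain rfl := hf c
    exact ⟨t, h.trans g, fun s hs => (h' s hs).trans (g' s hs)⟩
  · exact ⟨u, by rw [h' u c]; exact g, fun s hs => (h' s (hs.trans c)).trans (g' s hs)⟩

lemma PP_total {m n : ℕ} (b : Fin m → Fin n → ℕ) (f : Fin n → ℕ)
    (i j : Fin m) (h : ∃ t : Fin n, b i t ≠ b j t) : PP b f i j ∨ PP b f j i := by
  obtain ⟨t, ht, hmin⟩ := Finset.exists_min_image (univ.filter fun t => b i t ≠ b j t) f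
    (by obtain ⟨t, h⟩ := h; exact ⟨t, by simpa using h⟩)
  simp only [mem_filter, mem_univ, true_and] at ht hmin
  have hm : ∀ s, f s < f t → b i s = b j s := by
    intro s hs
    by_contra hc
    have := hmin s hc
    omega
  rcases lt_or_gt_of_ne ht with c | c
  · exact Or.inl ⟨t, c, hm⟩
  · exact Or.inr ⟨t, c, fun s hs => (hm s hs).symm⟩

lemma exists_perm {m : ℕ} (R : Fin m → Fin m → Prop) (hi : ∀ i, ¬ R i i)
    (ht : ∀ i j l, R i j → R j l → R i l) (htot : ∀ i j, i ≠ j → R i j ∨ R j i) :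
    ∃ e : Equiv.Perm (Fin m), ∀ i j, e i < e j ↔ R i j := by
  classical
  have hlt : ∀ i, (univ.filter fun l => R l i).card < m := by
    intro i
    have : (univ.filter fun l => R l i).card < (univ : Finset (Fin m)).card := by
      apply Finset.card_lt_card
      rw [Finset.ssubset_univ_iff]
      intro h
      have := Finset.mem_univ i
      rw [← h] at this
      exact hi i (by simpa using this)
    simpa using this
  let g : Fin m → Fin m := fun i => ⟨_, hlt i⟩
  have hmono : ∀ i j, R i j → g i < g j := by
    intro i j h
    change (univ.filter fun l => R l i).card < (univ.filter fun l => R l j).card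
    apply Finset.card_lt_card
    rw [Finset.ssubset_iff_of_subset]
    · exact ⟨i, by simpa using h, by simpa using hi i⟩
    · intro l hl
      simp only [mem_filter, mem_univ, true_and] at hl ⊢
      exact ht _ _ _ hl h
  have hinj : Function.Injective g := by
    intro i j h
    by_contra hc
    rcases htot i j hc with c | c
    · exact absurd (hmono _ _ c) (by rw [h]; exact lt_irrefl _)
    · exact absurd (hmono _ _ c) (by rw [h]; exact lt_irrefl _)
  refine ⟨Equiv.ofBijective g (Finite.injective_iff_bijective.1 hinj), fun i j => ⟨fun h => ?_, hmono i j⟩⟩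
  change g i < g j at h
  by_contra hc
  by_cases hij : i = j
  · subst hij; exact lt_irrefl _ h
  · rcases htot i j hij with c | c
    · exact hc c
    · exact lt_asymm h (hmono _ _ c)

lemma ppos_step {m n : ℕ} (b : Fin m → Fin n → ℕ) (i j : Fin m) (k : Fin n)
    (h : b i k = b j k) (hp : PP b (ppos k) i j) : PP b (ppos ((k : ℕ) + 1)) i j := by
  obtain ⟨t, ht, hs⟩ := hp
  refine ⟨t, ht, fun s hlt => ?_⟩
  by_cases hsk : s = k
  · rw [hsk, h]
  · apply hs
    have htk : t ≠ k := by rintro rfl; omega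
    have h1 : (s : ℕ) ≠ k := fun h => hsk (Fin.ext h)
    have h2 : (t : ℕ) ≠ k := fun h => htk (Fin.ext h)
    unfold ppos at hlt ⊢
    split_ifs at hlt ⊢ <;> omega

lemma exists_flip {m n : ℕ} (L : Fin n → Equiv.Perm (Fin m)) (i j : Fin m) (hij : i ≠ j) (k : Fin n)
    (h1 : L k i < L k j) (d : ℕ) : ∀ t : Fin n, (t : ℕ) = k + d → L t j < L t i →
    ∃ k' : Fin n, CrossAt L i j k' ∧ k ≤ k' ∧ k' < t := by
  induction d with
  | zero =>
    intro t ht h2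
    obtain rfl : t = k := Fin.ext (by omega)
    exact absurd h1 (lt_asymm h2)
  | succ d ih =>
    intro t ht h2
    have htn := t.2
    let u : Fin n := ⟨k + d, by omega⟩
    have hu : (u : ℕ) = k + d := rfl
    have hne : L u i ≠ L u j := fun h => hij ((L u).injective h)
    have htu : t = ⟨(u : ℕ) + 1, by omega⟩ := Fin.ext (by simp [hu]; omega)
    rcases lt_or_gt_of_ne hne with c | c
    · refine ⟨u, ⟨by omega, Or.inl ⟨c, ?_⟩⟩, ?_, ?_⟩
      · rw [← htu]; exact h2
      · rw [Fin.le_def]; omega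
      · rw [Fin.lt_def]; omega
    · obtain ⟨k', a1, a2, a3⟩ := ih u hu c
      refine ⟨k', a1, a2, ?_⟩
      rw [Fin.lt_def] at a3 ⊢; omega

lemma CrossAt_symm {m n : ℕ} (L : Fin n → Equiv.Perm (Fin m)) (i j : Fin m) (k : Fin n)
    (h : CrossAt L i j k) : CrossAt L j i k := by
  obtain ⟨h, c⟩ := h
  exact ⟨h, c.symm⟩

lemma cross_half {m n : ℕ} (b : Fin m → Fin n → ℕ)
    (L : Fin n → Equiv.Perm (Fin m)) (hL : ∀ k i j, L k i < L k j ↔ PP b (ppos (k : ℕ)) i j)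
    (hC : Compatible b L)
    (L' : Fin n → Equiv.Perm (Fin m)) (hL' : Compatible b L') (i j : Fin m) (k : Fin n)
    (hk : (k : ℕ) + 1 < n) (c1 : L k i < L k j)
    (c2 : L ⟨(k : ℕ) + 1, hk⟩ j < L ⟨(k : ℕ) + 1, hk⟩ i) :
    b i k ≠ b j k ∧ ∃ k' : Fin n, CrossAt L' i j k' ∧ k ≤ k' ∧
      ∀ s, k < s → s ≤ k' → b i s = b j s := by
  have hij : i ≠ j := by rintro rfl; exact lt_irrefl _ c1
  have hne : b i k ≠ b j k := by
    intro h
    have h1 := ppos_step b i j k h ((hL _ _ _).1 c1)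
    exact lt_asymm c2 ((hL ⟨(k : ℕ) + 1, hk⟩ i j).2 h1)
  refine ⟨hne, ?_⟩
  have hb : b i k < b j k := by
    rcases lt_or_gt_of_ne hne with c | c
    · exact c
    · exact absurd (hC _ _ _ c) (lt_asymm c1)
  obtain ⟨t, ht, hs⟩ := (hL _ _ _).1 c2
  simp only at hs
  have hkt : (k : ℕ) < t := by
    by_contra hc
    have hne' : (t : ℕ) ≠ k := by
      intro h
      obtain rfl : t = k := Fin.ext h
      omega
    have := hs k (by
      have := k.2
      unfold ppos
      split_ifs <;> omega)
    omega
  obtain ⟨k', a1, a2, a3⟩ := exists_flip L' i j hij k (hL' _ _ _ hb) (t - k) t (by omega)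
    (hL' _ _ _ ht)
  refine ⟨k', a1, a2, fun s h1 h2 => (hs s ?_).symm⟩
  rw [Fin.lt_def] at h1 a3
  rw [Fin.le_def] at h2
  unfold ppos
  split_ifs <;> omega

lemma cross_full {m n : ℕ} (b : Fin m → Fin n → ℕ)
    (L : Fin n → Equiv.Perm (Fin m)) (hL : ∀ k i j, L k i < L k j ↔ PP b (ppos (k : ℕ)) i j)
    (hC : Compatible b L)
    (L' : Fin n → Equiv.Perm (Fin m)) (hL' : Compatible b L') (i j : Fin m) (k : Fin n)
    (hc : CrossAt L i j k) :
    b i k ≠ b j k ∧ ∃ k' : Fin n, CrossAt L' i j k' ∧ k ≤ k' ∧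
      ∀ s, k < s → s ≤ k' → b i s = b j s := by
  obtain ⟨hk, ⟨c1, c2⟩ | ⟨c1, c2⟩⟩ := hc
  · exact cross_half b L hL hC L' hL' i j k hk c1 c2
  · obtain ⟨h, k', a1, a2, a3⟩ := cross_half b L hL hC L' hL' j i k hk c1 c2
    exact ⟨h.symm, k', CrossAt_symm _ _ _ _ a1, a2, fun s x y => (a3 s x y).symm⟩

lemma count_le {m n : ℕ} (b : Fin m → Fin n → ℕ)
    (L : Fin n → Equiv.Perm (Fin m)) (hL : ∀ k i j, L k i < L k j ↔ PP b (ppos (k : ℕ)) i j)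
    (hC : Compatible b L)
    (L' : Fin n → Equiv.Perm (Fin m)) (hL' : Compatible b L') (i j : Fin m) :
    crossCount L i j ≤ crossCount L' i j := by
  have key := cross_full b L hL hC L' hL' i j
  choose h1 f hf1 hf2 hf3 using key
  unfold crossCount
  refine Finset.card_le_card_of_injOn (fun k => if h : CrossAt L i j k then f k h else k) ?_ ?_
  · intro k hk
    have hk' : CrossAt L i j k := by simpa using hk
    simp only [hk', dif_pos]
    simpa using hf1 k hk'
  · intro k hk l hl h
    have hk' : CrossAt L i j k := by simpa using hk
    have hl' : CrossAt L i j l := by simpa using hl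
    simp only [hk', hl', dif_pos] at h
    rcases lt_trichotomy k l with c | c | c
    · exact absurd (hf3 k hk' l c (h ▸ hf2 l hl')) (h1 l hl')
    · exact c
    · exact absurd (hf3 l hl' k c (h ▸ hf2 k hk')) (h1 k hk')

theorem lookahead_first_column_order {m n : ℕ} (hm : 0 < m) (hn : 0 < n)
    (b : Fin m → Fin n → ℕ)
    (hdist : ∀ i j : Fin m, i ≠ j → ∃ t : Fin n, b i t ≠ b j t) :
    (∀ i : Fin m, ¬ Prec b i i) ∧
    (∀ i j l : Fin m, Prec b i j → Prec b j l → Prec b i l) ∧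
    (∀ i j : Fin m, i ≠ j → Prec b i j ∨ Prec b j i) ∧
    ∃ L : Fin n → Equiv.Perm (Fin m), Compatible b L ∧
      (∀ L' : Fin n → Equiv.Perm (Fin m), Compatible b L' → totalCross L ≤ totalCross L') ∧
      ∀ i j : Fin m, Prec b i j → L ⟨0, hn⟩ i < L ⟨0, hn⟩ j := by
  have hPrec : ∀ i j, Prec b i j ↔ PP b (ppos 0) i j := by
    intro i j
    simp [Prec, PP, ppos]
  have hex : ∀ k : Fin n, ∃ e : Equiv.Perm (Fin m), ∀ i j, e i < e j ↔ PP b (ppos (k : ℕ)) i j :=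
    fun k => exists_perm _ (PP_irrefl b _) (PP_trans b _ (ppos_inj _))
      (fun i j h => PP_total b _ i j (hdist i j h))
  choose L hL using hex
  have hC : Compatible b L := by
    intro i j k h
    rw [hL]
    refine ⟨k, h, fun s hs => ?_⟩
    have := k.2
    have := s.2
    unfold ppos at hs
    split_ifs at hs <;> omega
  simp only [hPrec]
  refine ⟨PP_irrefl b _, PP_trans b _ (ppos_inj _),
    fun i j h => PP_total b _ i j (hdist i j h), L, hC, ?_, ?_⟩
  · intro L' hL'
    exact Finset.sum_le_sum fun p _ => count_le b L hL hC L' hL' p.1 p.2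
  · intro i j h
    exact (hL ⟨0, hn⟩ i j).2 h
end
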